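/- arXiv:math/0610495 — 2 statements merged into one kernel-verified Lean document; each statement's English description precedes it below -/
import Mathlib

section
/- Let α1, α2, β be complex numbers with |Re α1|, |Re α2|, |Re β| < 1/8. Then the triple mixed partial derivative (∂/∂α1)(∂/∂α2)(∂/∂β) of A_ζ(α1,α2,β;γ1,γ2,δ), evaluated at γ1 = α1, γ2 = α2, δ = β, equals Q(α1+β, α2+β), where Q(x,y) := −Σ_p log^3 p / [ p^{2+x+y} (1−p^{−1−x})(1−p^{−1−y}) ], the sum being over all primes p. -/
open Complex

noncomputable section

/-- The cast of a prime number to `ℂ`. -/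
def pc (p : Nat.Primes) : ℂ := ((p : ℕ) : ℂ)

/-- The local (at the prime `p`) factor of the Euler product `A_ζ(α1,α2,β;γ1,γ2,δ)`
appearing in the three-over-three ratios conjecture. -/
def AzetaFactor (a1 a2 b g1 g2 d : ℂ) (p : Nat.Primes) : ℂ :=
  ((1 - pc p ^ (-1 - g1 - d)) * (1 - pc p ^ (-1 - g2 - d)) /
      ((1 - pc p ^ (-1 - a1 - d)) * (1 - pc p ^ (-1 - a2 - d)) *
        (1 - pc p ^ (-1 - g1 - b)) * (1 - pc p ^ (-1 - g2 - b)))) *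
    (1 - pc p ^ (b - d) - pc p ^ (-1 - g1 - b) + pc p ^ (-1 - g1 - d)
      - pc p ^ (-1 - g2 - b) + pc p ^ (-1 - g2 - d)
      + pc p ^ (-2 - g1 - g2 - 2 * b) - pc p ^ (-2 - g1 - g2 - b - d)
      + pc p ^ (b - d) * (1 - pc p ^ (-1 - a1 - b)) * (1 - pc p ^ (-1 - a2 - b)))

/-- The Euler product `A_ζ(α1,α2,β;γ1,γ2,δ)` over all primes. -/
def Azeta (a1 a2 b g1 g2 d : ℂ) : ℂ := ∏' p : Nat.Primes, AzetaFactor a1 a2 b g1 g2 d p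

/-- `Q(x,y) = −Σ_p log³p / [p^{2+x+y}(1−p^{−1−x})(1−p^{−1−y})]`. -/
def Qeuler (x y : ℂ) : ℂ :=
  -∑' p : Nat.Primes,
      (Real.log ((p : ℕ) : ℝ) : ℂ) ^ 3 /
        (pc p ^ (2 + x + y) * (1 - pc p ^ (-1 - x)) * (1 - pc p ^ (-1 - y)))

/-!
Every local factor of `A_ζ(x₁,x₂,y;a₁,a₂,b)` equals `1` at `y = b`, so there the `y`-derivative of
the product is the sum over `p` of the `y`-derivatives of the local factors. With
`ζ_p(s) = (1 - p^{-1-s})⁻¹`, the latter are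
`-log p · (ζ_p(x₁+b) ζ_p(x₂+b) / (ζ_p(a₁+b) ζ_p(a₂+b)) - ζ_p(x₁+b) - ζ_p(x₂+b) + const)`,
where only the product survives `∂²/∂x₁∂x₂`; at `xᵢ = aᵢ` it gives
`-log p · (ζ_p'/ζ_p)(a₁+b) · (ζ_p'/ζ_p)(a₂+b)`, the local term of `Q`. The local factors are
`1 + O(p^{-2σ})` for some `σ > 1/2`, uniformly near the base point, and Cauchy's estimate passes
this bound on to the derivatives, which justifies differentiating the sums term by term.
-/

open Filter Metric Set
open scoped Topology

section EulerProduct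

variable {ι E F : Type*} [NormedAddCommGroup E] [NormedAddCommGroup F]

lemma deriv_tprod_of_forall_eq_one {f : ι → ℂ → ℂ} {U : Set ℂ} {u : ι → ℝ} {z : ℂ}
    (hU : IsOpen U) (hz : z ∈ U) (hu : Summable u) (hf : ∀ i, DifferentiableOn ℂ (f i) U)
    (hfu : ∀ i, ∀ y ∈ U, ‖f i y - 1‖ ≤ u i) (hone : ∀ i, f i z = 1) :
    deriv (fun y => ∏' i, f i y) z = ∑' i, deriv (f i) z := by
  have hlog (i : ι) : logDeriv (f i) z = deriv (f i) z := by
    rw [logDeriv_apply, hone, div_one]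
  have hsum : Summable fun i => deriv (f i) z := by
    simpa only [deriv_sub_const_fun] using (hasSum_deriv_of_summable_norm hu
      (fun i => (hf i).sub_const 1) hU hfu hz).summable
  have hmul : MultipliableLocallyUniformlyOn f U := by
    simpa only [add_sub_cancel] using Summable.multipliableLocallyUniformlyOn_one_add hU hu
      (.of_forall hfu) (fun i => (hf i).continuousOn.sub continuousOn_const)
  have hval : ∏' i, f i z = 1 := by simp only [hone, tprod_one]
  have key := logDeriv_tprod_eq_tsum hU hz (fun i => by simp [hone i]) hf
    (by simpa only [hlog] using hsum) hmul (by simp [hval])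
  simpa only [hlog, logDeriv_apply, hval, div_one] using key

lemma analyticOnNhd_deriv_snd {𝕜 : Type*} [NontriviallyNormedField 𝕜] [NormedSpace 𝕜 E]
    [NormedSpace 𝕜 F] [CompleteSpace F] {f : E → 𝕜 → F} {U : Set E} {V : Set 𝕜} {b : 𝕜}
    (hf : AnalyticOnNhd 𝕜 (fun z : E × 𝕜 => f z.1 z.2) (U ×ˢ V)) (hb : b ∈ V) :
    AnalyticOnNhd 𝕜 (fun x => deriv (f x) b) U := by
  intro x hx
  have hfx := hf (x, b) ⟨hx, hb⟩
  have hpartial : ∀ᶠ x' in 𝓝 x,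
      fderiv 𝕜 (fun z : E × 𝕜 => f z.1 z.2) (x', b) (0, 1) = deriv (f x') b := by
    have hcont : ContinuousAt (fun x' : E => (x', b)) x := by fun_prop
    filter_upwards [hcont.eventually hfx.eventually_analyticAt] with x' hx'
    have hline : HasDerivAt (fun y : 𝕜 => (x', y)) ((0, 1) : E × 𝕜) b :=
      (hasDerivAt_const b x').prodMk (hasDerivAt_id b)
    exact (hx'.differentiableAt.hasFDerivAt.comp_hasDerivAt b hline).deriv.symm
  have hfderiv : AnalyticAt 𝕜
      (fun x' => fderiv 𝕜 (fun z : E × 𝕜 => f z.1 z.2) (x', b)) x :=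
    hfx.fderiv.curry_left
  exact (((ContinuousLinearMap.apply 𝕜 F ((0, 1) : E × 𝕜)).analyticAt _).fun_comp
    hfderiv).congr hpartial

lemma exists_norm_deriv_le_mul [NormedSpace ℂ F] {V : Set ℂ} {c : ℂ} (hV : IsOpen V) (hc : c ∈ V) :
    ∃ K : ℝ, ∀ (g : ℂ → F) (C : ℝ), DifferentiableOn ℂ g V →
      (∀ z ∈ V, ‖g z‖ ≤ C) → ‖deriv g c‖ ≤ K * C := by
  obtain ⟨R, hR, hball⟩ := nhds_basis_closedBall.mem_iff.mp (hV.mem_nhds hc)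
  refine ⟨R⁻¹, fun g C hg hC => ?_⟩
  rw [inv_mul_eq_div]
  exact norm_deriv_le_of_forall_mem_sphere_norm_le hR
    (hg.diffContOnCl_ball hball) fun z hz => hC z (hball (sphere_subset_closedBall hz))

lemma deriv_deriv_tsum [NormedSpace ℂ F] [CompleteSpace F] {g : ι → ℂ → ℂ → F} {U V : Set ℂ}
    {u : ι → ℝ} {a b : ℂ} (hU : IsOpen U) (hV : IsOpen V) (ha : a ∈ U) (hb : b ∈ V)
    (hu : Summable u)
    (hg : ∀ i, AnalyticOnNhd ℂ (fun z : ℂ × ℂ => g i z.1 z.2) (U ×ˢ V))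
    (hgu : ∀ i, ∀ x ∈ U, ∀ y ∈ V, ‖g i x y‖ ≤ u i) :
    deriv (fun x => deriv (fun y => ∑' i, g i x y) b) a =
      ∑' i, deriv (fun x => deriv (g i x) b) a := by
  obtain ⟨K, hK⟩ := exists_norm_deriv_le_mul (F := F) hV hb
  have hdiff (i : ι) {x : ℂ} (hx : x ∈ U) : DifferentiableOn ℂ (g i x) V := fun y hy =>
    (hg i (x, y) ⟨hx, hy⟩).curry_right.differentiableAt.differentiableWithinAt
  have hinner {x : ℂ} (hx : x ∈ U) :
      deriv (fun y => ∑' i, g i x y) b = ∑' i, deriv (g i x) b :=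
    (hasSum_deriv_of_summable_norm hu (fun i => hdiff i hx) hV
      (fun i => hgu i x hx) hb).tsum_eq.symm
  rw [EventuallyEq.deriv_eq (eventually_of_mem (hU.mem_nhds ha) fun x => hinner)]
  exact (hasSum_deriv_of_summable_norm (hu.mul_left K)
    (fun i => (analyticOnNhd_deriv_snd (hg i) hb).differentiableOn) hU
    (fun i x hx => hK (g i x) (u i) (hdiff i hx) (hgu i x hx)) ha).tsum_eq.symm

lemma deriv_deriv_deriv_tprod_of_forall_eq_one {f : ι → ℂ → ℂ → ℂ → ℂ} {U₁ U₂ V : Set ℂ}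
    {u : ι → ℝ} {a₁ a₂ b : ℂ} (hU₁ : IsOpen U₁) (hU₂ : IsOpen U₂) (hV : IsOpen V)
    (ha₁ : a₁ ∈ U₁) (ha₂ : a₂ ∈ U₂) (hb : b ∈ V) (hu : Summable u)
    (hf : ∀ i, AnalyticOnNhd ℂ (fun z : (ℂ × ℂ) × ℂ => f i z.1.1 z.1.2 z.2)
      ((U₁ ×ˢ U₂) ×ˢ V))
    (hfu : ∀ i, ∀ x₁ ∈ U₁, ∀ x₂ ∈ U₂, ∀ y ∈ V, ‖f i x₁ x₂ y - 1‖ ≤ u i)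
    (hone : ∀ i, ∀ x₁ ∈ U₁, ∀ x₂ ∈ U₂, f i x₁ x₂ b = 1) :
    deriv (fun x₁ => deriv (fun x₂ => deriv (fun y => ∏' i, f i x₁ x₂ y) b) a₂) a₁ =
      ∑' i, deriv (fun x₁ => deriv (fun x₂ => deriv (f i x₁ x₂) b) a₂) a₁ := by
  obtain ⟨K, hK⟩ := exists_norm_deriv_le_mul (F := ℂ) hV hb
  have hdiff (i : ι) {x₁ x₂ : ℂ} (hx₁ : x₁ ∈ U₁) (hx₂ : x₂ ∈ U₂) :
      DifferentiableOn ℂ (f i x₁ x₂) V := fun y hy =>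
    (hf i ((x₁, x₂), y) ⟨⟨hx₁, hx₂⟩, hy⟩).curry_right.differentiableAt.differentiableWithinAt
  have hinner {x₁ : ℂ} (hx₁ : x₁ ∈ U₁) :
      deriv (fun x₂ => deriv (fun y => ∏' i, f i x₁ x₂ y) b) a₂ =
        deriv (fun x₂ => ∑' i, deriv (f i x₁ x₂) b) a₂ :=
    EventuallyEq.deriv_eq <| eventually_of_mem (hU₂.mem_nhds ha₂) fun x₂ hx₂ =>
      deriv_tprod_of_forall_eq_one hV hb hu (fun i => hdiff i hx₁ hx₂)
        (fun i => hfu i x₁ hx₁ x₂ hx₂) fun i => hone i x₁ hx₁ x₂ hx₂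
  rw [EventuallyEq.deriv_eq (eventually_of_mem (hU₁.mem_nhds ha₁) fun x₁ => hinner)]
  refine deriv_deriv_tsum hU₁ hU₂ ha₁ ha₂ (hu.mul_left K) (fun i => analyticOnNhd_deriv_snd
    (f := fun z : ℂ × ℂ => f i z.1 z.2) (hf i) hb) fun i x₁ hx₁ x₂ hx₂ => ?_
  simpa only [deriv_sub_const_fun] using
    hK _ (u i) ((hdiff i hx₁ hx₂).sub_const 1) (hfu i x₁ hx₁ x₂ hx₂)

end EulerProduct

section LocalRatio

lemma deriv_deriv_mul_sub_sub {𝕜 : Type*} [NontriviallyNormedField 𝕜] {g₁ g₂ : 𝕜 → 𝕜} {a₁ a₂ : 𝕜}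
    (hg₁ : DifferentiableAt 𝕜 g₁ a₁) (hg₂ : DifferentiableAt 𝕜 g₂ a₂) (c d k : 𝕜) :
    deriv (fun x₁ => deriv (fun x₂ => c * (g₁ x₁ * g₂ x₂ / k - g₁ x₁ - g₂ x₂ + d)) a₂) a₁ =
      c * (deriv g₁ a₁ * deriv g₂ a₂ / k) := by
  have hinner (x₁ : 𝕜) :
      deriv (fun x₂ => c * (g₁ x₁ * g₂ x₂ / k - g₁ x₁ - g₂ x₂ + d)) a₂ =
        c * (g₁ x₁ * deriv g₂ a₂ / k - deriv g₂ a₂) :=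
    (((((hg₂.hasDerivAt.const_mul (g₁ x₁)).div_const k).sub_const (g₁ x₁)).fun_sub
      hg₂.hasDerivAt).add_const d |>.const_mul c).deriv
  simp only [hinner]
  exact ((((hg₁.hasDerivAt.mul_const (deriv g₂ a₂)).div_const k).sub_const _).const_mul c).deriv

/-- The local factor of `A_ζ` as a rational function of `p^{-1-s}`, where `rᵢ`, `uᵢ`, `tᵢ`, `v` are
its values at `s = γᵢ + δ`, `αᵢ + δ`, `γᵢ + β`, `α₂ + β`. The exponent `β - δ`, which is not of this
form, has been absorbed into `uᵢ`. -/
def localRatio {K : Type*} [Field K] (r₁ r₂ u₁ u₂ t₁ t₂ v : K) : K :=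
  (1 - r₁) * (1 - r₂) / ((1 - u₁) * (1 - u₂) * ((1 - t₁) * (1 - t₂))) *
    ((1 - t₁) * (1 - t₂) + r₁ + r₂ - u₁ - u₂ + u₁ * v - r₁ * t₂)

/-- The terms of degree at most one cancel in the numerator, which is what makes `A_ζ` converge. -/
lemma localRatio_sub_one_eq {K : Type*} [Field K] {r₁ r₂ u₁ u₂ t₁ t₂ v : K}
    (hu₁ : 1 - u₁ ≠ 0) (hu₂ : 1 - u₂ ≠ 0) (ht₁ : 1 - t₁ ≠ 0) (ht₂ : 1 - t₂ ≠ 0) :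
    localRatio r₁ r₂ u₁ u₂ t₁ t₂ v - 1 =
      ((r₁ + r₂ - (u₁ + u₂)) * (t₁ + t₂ - (r₁ + r₂) + (r₁ * r₂ - t₁ * t₂)) +
          (1 - t₁) * (1 - t₂) * (r₁ * r₂ - u₁ * u₂) +
          (1 - r₁) * (1 - r₂) * (u₁ * v - r₁ * t₂)) /
        ((1 - u₁) * (1 - u₂) * ((1 - t₁) * (1 - t₂))) := by
  rw [localRatio]
  field_simp
  ring

lemma norm_localRatio_sub_one_le {K : Type*} [NormedField K] {r₁ r₂ u₁ u₂ t₁ t₂ v : K}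
    {w : ℝ} (hw : w < 1)
    (hr₁ : ‖r₁‖ ≤ w) (hr₂ : ‖r₂‖ ≤ w) (hu₁ : ‖u₁‖ ≤ w) (hu₂ : ‖u₂‖ ≤ w)
    (ht₁ : ‖t₁‖ ≤ w) (ht₂ : ‖t₂‖ ≤ w) (hv : ‖v‖ ≤ w) :
    ‖localRatio r₁ r₂ u₁ u₂ t₁ t₂ v - 1‖ ≤ 40 * w ^ 2 / (1 - w) ^ 4 := by
  have : 0 ≤ w := (norm_nonneg r₁).trans hr₁
  have hw' : 0 < 1 - w := sub_pos.mpr hw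
  have hlower {z : K} (hz : ‖z‖ ≤ w) : 1 - w ≤ ‖1 - z‖ := by
    have := norm_sub_norm_le (1 : K) z
    rw [norm_one] at this
    linarith
  have hupper {z : K} (hz : ‖z‖ ≤ w) : ‖1 - z‖ ≤ 2 := by
    have := norm_sub_le_of_le norm_one.le hz
    linarith
  have hne {z : K} (hz : ‖z‖ ≤ w) : 1 - z ≠ 0 := norm_pos_iff.mp (hw'.trans_le (hlower hz))
  have hdiff {z₁ z₂ z₃ z₄ : K} (h₁ : ‖z₁‖ ≤ w) (h₂ : ‖z₂‖ ≤ w) (h₃ : ‖z₃‖ ≤ w)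
      (h₄ : ‖z₄‖ ≤ w) : ‖z₁ * z₂ - z₃ * z₄‖ ≤ w * w + w * w :=
    norm_sub_le_of_le (norm_mul_le_of_le h₁ h₂) (norm_mul_le_of_le h₃ h₄)
  have hsum {z₁ z₂ z₃ z₄ : K} (h₁ : ‖z₁‖ ≤ w) (h₂ : ‖z₂‖ ≤ w) (h₃ : ‖z₃‖ ≤ w)
      (h₄ : ‖z₄‖ ≤ w) : ‖z₁ + z₂ - (z₃ + z₄)‖ ≤ w + w + (w + w) :=
    norm_sub_le_of_le (norm_add_le_of_le h₁ h₂) (norm_add_le_of_le h₃ h₄)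
  have hnum := norm_add_le_of_le (norm_add_le_of_le
    (norm_mul_le_of_le (hsum hr₁ hr₂ hu₁ hu₂)
      (norm_add_le_of_le (hsum ht₁ ht₂ hr₁ hr₂) (hdiff hr₁ hr₂ ht₁ ht₂)))
    (norm_mul_le_of_le (norm_mul_le_of_le (hupper ht₁) (hupper ht₂)) (hdiff hr₁ hr₂ hu₁ hu₂)))
    (norm_mul_le_of_le (norm_mul_le_of_le (hupper hr₁) (hupper hr₂)) (hdiff hu₁ hv hr₁ ht₂))
  rw [localRatio_sub_one_eq (hne hu₁) (hne hu₂) (hne ht₁) (hne ht₂), norm_div]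
  refine div_le_div₀ (by positivity) (hnum.trans ?_) (by positivity) ?_
  · nlinarith [mul_nonneg (sq_nonneg w) hw'.le]
  · calc (1 - w) ^ 4 = (1 - w) * (1 - w) * ((1 - w) * (1 - w)) := by ring
      _ ≤ ‖1 - u₁‖ * ‖1 - u₂‖ * (‖1 - t₁‖ * ‖1 - t₂‖) := by
        gcongr <;> exact hlower ‹_›
      _ = ‖(1 - u₁) * (1 - u₂) * ((1 - t₁) * (1 - t₂))‖ := by simp only [norm_mul]

end LocalRatio

section LocalFactor

/-- The Dirichlet series term `p^{-1-s}` of `ζ(1+s)`. -/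
def primeTerm (p : Nat.Primes) (s : ℂ) : ℂ := pc p ^ (-1 - s)

/-- The local Euler factor `(1 - p^{-1-s})⁻¹` of `ζ(1+s)` at the prime `p`. -/
def zetaFactor (p : Nat.Primes) (s : ℂ) : ℂ := (1 - primeTerm p s)⁻¹

variable (p : Nat.Primes) {s : ℂ}

lemma pc_ne_zero : pc p ≠ 0 := Nat.cast_ne_zero.mpr p.2.ne_zero

lemma log_pc : log (pc p) = Real.log ((p : ℕ) : ℝ) := natCast_log.symm

lemma norm_primeTerm (s : ℂ) : ‖primeTerm p s‖ = ((p : ℕ) : ℝ) ^ (-1 - s.re) := by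
  simp [primeTerm, pc, norm_natCast_cpow_of_pos p.2.pos]

lemma norm_primeTerm_le {σ : ℝ} (hσ : σ ≤ 1 + s.re) :
    ‖primeTerm p s‖ ≤ ((p : ℕ) : ℝ) ^ (-σ) := by
  rw [norm_primeTerm]
  exact Real.rpow_le_rpow_of_exponent_le (mod_cast p.2.one_le) (by linarith)

lemma one_sub_primeTerm_ne_zero (hs : -1 < s.re) : 1 - primeTerm p s ≠ 0 := by
  have hlt : ‖primeTerm p s‖ < 1 := by
    rw [norm_primeTerm]
    exact Real.rpow_lt_one_of_one_lt_of_neg (mod_cast p.2.one_lt) (by linarith)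
  exact sub_ne_zero.mpr fun h => by simp [← h] at hlt

lemma hasDerivAt_primeTerm (s : ℂ) :
    HasDerivAt (primeTerm p) (-(log (pc p) * primeTerm p s)) s := by
  refine (((hasDerivAt_id s).const_sub (-1)).const_cpow (.inl (pc_ne_zero p))).congr_deriv ?_
  simp only [primeTerm, id]
  ring

lemma differentiable_primeTerm : Differentiable ℂ (primeTerm p) := fun s =>
  (hasDerivAt_primeTerm p s).differentiableAt

@[fun_prop]
lemma analyticAt_primeTerm : AnalyticAt ℂ (primeTerm p) s :=
  (differentiable_primeTerm p).analyticAt s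

lemma hasDerivAt_zetaFactor (hs : -1 < s.re) :
    HasDerivAt (zetaFactor p) (-(log (pc p) * primeTerm p s) * zetaFactor p s ^ 2) s := by
  refine (((hasDerivAt_primeTerm p s).const_sub 1).fun_inv
    (one_sub_primeTerm_ne_zero p hs)).congr_deriv ?_
  rw [zetaFactor, inv_pow]
  ring

lemma logDeriv_zetaFactor (hs : -1 < s.re) :
    logDeriv (zetaFactor p) s = -(log (pc p) * primeTerm p s * zetaFactor p s) := by
  have hne : zetaFactor p s ≠ 0 := inv_ne_zero (one_sub_primeTerm_ne_zero p hs)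
  rw [logDeriv_apply, (hasDerivAt_zetaFactor p hs).deriv]
  field_simp

lemma Qeuler_eq_tsum_logDeriv {x y : ℂ} (hx : -1 < x.re) (hy : -1 < y.re) :
    Qeuler x y = ∑' p : Nat.Primes,
      -log (pc p) * (logDeriv (zetaFactor p) x * logDeriv (zetaFactor p) y) := by
  rw [Qeuler, ← tsum_neg]
  refine tsum_congr fun p => ?_
  have hpow : pc p ^ (2 + x + y) = (primeTerm p x * primeTerm p y)⁻¹ := by
    rw [primeTerm, primeTerm, ← cpow_add _ _ (pc_ne_zero p), ← cpow_neg]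
    ring_nf
  rw [logDeriv_zetaFactor p hx, logDeriv_zetaFactor p hy, ← log_pc, hpow]
  simp only [← primeTerm.eq_1, zetaFactor, div_eq_mul_inv, mul_inv, inv_inv]
  ring

lemma AzetaFactor_eq_localRatio (x₁ x₂ y a₁ a₂ b : ℂ) :
    AzetaFactor x₁ x₂ y a₁ a₂ b p =
      localRatio (primeTerm p (a₁ + b)) (primeTerm p (a₂ + b)) (primeTerm p (x₁ + b))
        (primeTerm p (x₂ + b)) (primeTerm p (a₁ + y)) (primeTerm p (a₂ + y))
        (primeTerm p (x₂ + y)) := by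
  have hterm (x z : ℂ) : pc p ^ (-1 - x - z) = primeTerm p (x + z) := by
    rw [primeTerm, sub_sub]
  have hprod (x x' z z' : ℂ) :
      pc p ^ (-2 - x - x' - z' - z) = primeTerm p (x + z) * primeTerm p (x' + z') := by
    rw [primeTerm, primeTerm, ← cpow_add _ _ (pc_ne_zero p)]
    ring_nf
  have hdouble : pc p ^ (-2 - a₁ - a₂ - 2 * y) =
      primeTerm p (a₁ + y) * primeTerm p (a₂ + y) := by
    rw [← hprod]
    ring_nf
  have hshift (x : ℂ) : pc p ^ (y - b) * primeTerm p (x + y) = primeTerm p (x + b) := by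
    rw [primeTerm, primeTerm, ← cpow_add _ _ (pc_ne_zero p)]
    ring_nf
  rw [AzetaFactor, hdouble, hprod]
  simp only [hterm]
  rw [localRatio, ← hshift x₁, ← hshift x₂]
  ring

lemma AzetaFactor_eq_one {x₁ x₂ a₁ a₂ b : ℂ} (hx₁ : -1 < (x₁ + b).re) (hx₂ : -1 < (x₂ + b).re)
    (ha₁ : -1 < (a₁ + b).re) (ha₂ : -1 < (a₂ + b).re) :
    AzetaFactor x₁ x₂ b a₁ a₂ b p = 1 := by
  have hx₁' := one_sub_primeTerm_ne_zero p hx₁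
  have hx₂' := one_sub_primeTerm_ne_zero p hx₂
  have ha₁' := one_sub_primeTerm_ne_zero p ha₁
  have ha₂' := one_sub_primeTerm_ne_zero p ha₂
  rw [AzetaFactor_eq_localRatio, localRatio]
  field_simp
  ring

lemma analyticAt_AzetaFactor {x₁ x₂ y a₁ a₂ b : ℂ} (hx₁ : -1 < (x₁ + b).re)
    (hx₂ : -1 < (x₂ + b).re) (ha₁ : -1 < (a₁ + y).re) (ha₂ : -1 < (a₂ + y).re) :
    AnalyticAt ℂ (fun z : (ℂ × ℂ) × ℂ => AzetaFactor z.1.1 z.1.2 z.2 a₁ a₂ b p)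
      ((x₁, x₂), y) := by
  have hfst : AnalyticAt ℂ (fun z : (ℂ × ℂ) × ℂ => z.1.1) ((x₁, x₂), y) :=
    analyticAt_fst.fun_comp analyticAt_fst
  have hsnd : AnalyticAt ℂ (fun z : (ℂ × ℂ) × ℂ => z.1.2) ((x₁, x₂), y) :=
    analyticAt_snd.fun_comp analyticAt_fst
  have hlast : AnalyticAt ℂ (fun z : (ℂ × ℂ) × ℂ => z.2) ((x₁, x₂), y) := analyticAt_snd
  simp only [AzetaFactor_eq_localRatio, localRatio]
  refine .fun_mul (.fun_div (by fun_prop) (by fun_prop) ?_) (by fun_prop)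
  simp [one_sub_primeTerm_ne_zero p, hx₁, hx₂, ha₁, ha₂, -add_re]

/-- At `y = b` only the product of local zeta factors involves both `x₁` and `x₂`. -/
lemma hasDerivAt_AzetaFactor {x₁ x₂ a₁ a₂ b : ℂ} (hx₁ : -1 < (x₁ + b).re)
    (hx₂ : -1 < (x₂ + b).re) (ha₁ : -1 < (a₁ + b).re) (ha₂ : -1 < (a₂ + b).re) :
    HasDerivAt (fun y => AzetaFactor x₁ x₂ y a₁ a₂ b p)
      (-log (pc p) *
        (zetaFactor p (x₁ + b) * zetaFactor p (x₂ + b) /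
            (zetaFactor p (a₁ + b) * zetaFactor p (a₂ + b))
          - zetaFactor p (x₁ + b) - zetaFactor p (x₂ + b)
          + (zetaFactor p (a₁ + b) + zetaFactor p (a₂ + b) - 1))) b := by
  have hx₁' := one_sub_primeTerm_ne_zero p hx₁
  have hx₂' := one_sub_primeTerm_ne_zero p hx₂
  have ha₁' := one_sub_primeTerm_ne_zero p ha₁
  have ha₂' := one_sub_primeTerm_ne_zero p ha₂
  have hterm (x : ℂ) : HasDerivAt (fun y => primeTerm p (x + y))
      (-(log (pc p) * primeTerm p (x + b))) b := (hasDerivAt_primeTerm p (x + b)).comp_const_add x b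
  have hprod := ((hterm a₁).const_sub 1).fun_mul ((hterm a₂).const_sub 1)
  have hprefactor := (hasDerivAt_const b ((1 - primeTerm p (a₁ + b)) *
    (1 - primeTerm p (a₂ + b)))).fun_div
      (hprod.const_mul ((1 - primeTerm p (x₁ + b)) * (1 - primeTerm p (x₂ + b))))
      (by simp only [mul_ne_zero_iff]; tauto)
  have hbracket := (((((hprod.add_const (primeTerm p (a₁ + b))).add_const
    (primeTerm p (a₂ + b))).sub_const (primeTerm p (x₁ + b))).sub_const
    (primeTerm p (x₂ + b))).fun_add ((hterm x₂).const_mul (primeTerm p (x₁ + b)))).fun_sub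
      ((hterm a₂).const_mul (primeTerm p (a₁ + b)))
  simp only [AzetaFactor_eq_localRatio, localRatio]
  refine (hprefactor.fun_mul hbracket).congr_deriv ?_
  simp only [zetaFactor]
  generalize primeTerm p (a₁ + b) = r₁ at *
  generalize primeTerm p (a₂ + b) = r₂ at *
  generalize primeTerm p (x₁ + b) = u₁ at *
  generalize primeTerm p (x₂ + b) = u₂ at *
  field_simp
  ring

lemma deriv_deriv_deriv_AzetaFactor {a₁ a₂ b : ℂ} (ha₁ : -1 < (a₁ + b).re)
    (ha₂ : -1 < (a₂ + b).re) :
    deriv (fun x₁ => deriv (fun x₂ => deriv (fun y => AzetaFactor x₁ x₂ y a₁ a₂ b p) b) a₂) a₁ =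
      -log (pc p) * (logDeriv (zetaFactor p) (a₁ + b) * logDeriv (zetaFactor p) (a₂ + b)) := by
  have hnear {a : ℂ} (ha : -1 < (a + b).re) : ∀ᶠ x in 𝓝 a, -1 < (x + b).re :=
    ContinuousAt.eventually_lt (by fun_prop) (by fun_prop) ha
  have hzeta {a : ℂ} (ha : -1 < (a + b).re) :
      DifferentiableAt ℂ (fun x => zetaFactor p (x + b)) a :=
    ((hasDerivAt_zetaFactor p ha).comp_add_const a b).differentiableAt
  have hinner {x₁ : ℂ} (hx₁ : -1 < (x₁ + b).re) :=
    EventuallyEq.deriv_eq <| (hnear ha₂).mono fun x₂ hx₂ =>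
      (hasDerivAt_AzetaFactor p hx₁ hx₂ ha₁ ha₂).deriv
  rw [EventuallyEq.deriv_eq ((hnear ha₁).mono fun x₁ => hinner),
    deriv_deriv_mul_sub_sub (hzeta ha₁) (hzeta ha₂)]
  simp only [deriv_comp_add_const, logDeriv_apply, div_mul_div_comm]

lemma norm_AzetaFactor_sub_one_le {σ : ℝ} (hσ : 0 < σ) {x₁ x₂ y a₁ a₂ b : ℂ}
    (hx₁b : σ ≤ 1 + (x₁ + b).re) (hx₂b : σ ≤ 1 + (x₂ + b).re) (hx₂y : σ ≤ 1 + (x₂ + y).re)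
    (ha₁b : σ ≤ 1 + (a₁ + b).re) (ha₂b : σ ≤ 1 + (a₂ + b).re)
    (ha₁y : σ ≤ 1 + (a₁ + y).re) (ha₂y : σ ≤ 1 + (a₂ + y).re) :
    ‖AzetaFactor x₁ x₂ y a₁ a₂ b p - 1‖ ≤
      40 / (1 - 2 ^ (-σ)) ^ 4 * ((p : ℕ) : ℝ) ^ (-2 * σ) := by
  have htwo : ((p : ℕ) : ℝ) ^ (-σ) ≤ 2 ^ (-σ) :=
    Real.rpow_le_rpow_of_nonpos two_pos (mod_cast p.2.two_le) (neg_nonpos.mpr hσ.le)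
  have hlt : (2 : ℝ) ^ (-σ) < 1 :=
    Real.rpow_lt_one_of_one_lt_of_neg one_lt_two (neg_neg_iff_pos.mpr hσ)
  have hsq : (((p : ℕ) : ℝ) ^ (-σ)) ^ 2 = ((p : ℕ) : ℝ) ^ (-2 * σ) := by
    rw [← Real.rpow_mul_natCast (Nat.cast_nonneg _)]
    ring_nf
  have : 0 < 1 - (2 : ℝ) ^ (-σ) := sub_pos.mpr hlt
  rw [AzetaFactor_eq_localRatio]
  calc _ ≤ 40 * (((p : ℕ) : ℝ) ^ (-σ)) ^ 2 / (1 - ((p : ℕ) : ℝ) ^ (-σ)) ^ 4 := by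
        apply norm_localRatio_sub_one_le (htwo.trans_lt hlt) <;>
          exact norm_primeTerm_le p ‹_›
    _ ≤ 40 * (((p : ℕ) : ℝ) ^ (-σ)) ^ 2 / (1 - 2 ^ (-σ)) ^ 4 := by gcongr
    _ = 40 / (1 - 2 ^ (-σ)) ^ 4 * ((p : ℕ) : ℝ) ^ (-2 * σ) := by rw [hsq]; ring

end LocalFactor

lemma deriv_deriv_deriv_Azeta {a₁ a₂ b : ℂ} (ha₁ : -1 / 2 < (a₁ + b).re)
    (ha₂ : -1 / 2 < (a₂ + b).re) :
    deriv (fun x₁ => deriv (fun x₂ => deriv (fun y => Azeta x₁ x₂ y a₁ a₂ b) b) a₂) a₁ =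
      ∑' p, deriv (fun x₁ => deriv (fun x₂ =>
        deriv (fun y => AzetaFactor x₁ x₂ y a₁ a₂ b p) b) a₂) a₁ := by
  obtain ⟨R, hR, hR₁, hR₂⟩ :
      ∃ R, 0 < R ∧ R < ((a₁ + b).re + 1 / 2) / 3 ∧ R < ((a₂ + b).re + 1 / 2) / 3 := by
    simpa only [lt_min_iff] using exists_between (lt_min
      (show 0 < ((a₁ + b).re + 1 / 2) / 3 by linarith)
      (show 0 < ((a₂ + b).re + 1 / 2) / 3 by linarith))
  simp only [add_re] at hR₁ hR₂
  have hu : Summable fun p : Nat.Primes =>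
      40 / (1 - 2 ^ (-(1 / 2 + R))) ^ 4 * ((p : ℕ) : ℝ) ^ (-2 * (1 / 2 + R)) :=
    (Nat.Primes.summable_rpow.mpr (by linarith)).mul_left _
  have hmem (a : ℂ) : a ∈ {z : ℂ | a.re - R < z.re} := by simpa
  refine deriv_deriv_deriv_tprod_of_forall_eq_one
    (f := fun p x₁ x₂ y => AzetaFactor x₁ x₂ y a₁ a₂ b p)
    (isOpen_re_gt _) (isOpen_re_gt _) (isOpen_re_gt _)
    (hmem a₁) (hmem a₂) (hmem b) hu ?_ ?_ ?_
  · rintro p ⟨⟨x₁, x₂⟩, y⟩ ⟨⟨hx₁, hx₂⟩, hy⟩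
    simp only [mem_ofPred_eq] at hx₁ hx₂ hy
    apply analyticAt_AzetaFactor p <;> rw [add_re] <;> linarith
  · intro p x₁ hx₁ x₂ hx₂ y hy
    simp only [mem_ofPred_eq] at hx₁ hx₂ hy
    apply norm_AzetaFactor_sub_one_le p (by linarith) <;> rw [add_re] <;> linarith
  · intro p x₁ hx₁ x₂ hx₂
    simp only [mem_ofPred_eq] at hx₁ hx₂
    apply AzetaFactor_eq_one p <;> rw [add_re] <;> linarith

theorem stmt_8_general (a1 a2 b : ℂ) (h1 : -1 / 2 < (a1 + b).re) (h2 : -1 / 2 < (a2 + b).re) :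
    deriv (fun x1 : ℂ =>
        deriv (fun x2 : ℂ => deriv (fun y : ℂ => Azeta x1 x2 y a1 a2 b) b) a2) a1 =
      Qeuler (a1 + b) (a2 + b) := by
  rw [deriv_deriv_deriv_Azeta h1 h2, Qeuler_eq_tsum_logDeriv (by linarith) (by linarith)]
  exact tsum_congr fun p => deriv_deriv_deriv_AzetaFactor p (by linarith) (by linarith)

/-- The triple mixed partial derivative `(∂/∂α1)(∂/∂α2)(∂/∂β)` of `A_ζ(α1,α2,β;γ1,γ2,δ)`,
evaluated at `γ1 = α1`, `γ2 = α2`, `δ = β`, equals `Q(α1+β, α2+β)`. -/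
theorem stmt_8 (a1 a2 b : ℂ)
    (h1 : |a1.re| < 1 / 8) (h2 : |a2.re| < 1 / 8) (h3 : |b.re| < 1 / 8) :
    deriv (fun x1 : ℂ =>
        deriv (fun x2 : ℂ => deriv (fun y : ℂ => Azeta x1 x2 y a1 a2 b) b) a2) a1 =
      Qeuler (a1 + b) (a2 + b) := by
  rw [abs_lt] at h1 h2 h3
  exact stmt_8_general a1 a2 b (by rw [add_re]; linarith) (by rw [add_re]; linarith)

end
end

section
/- Let α, β be complex numbers with Re α > 0 and Re β > 0. Then the following averages over the unitary group U(N) with Haar probability measure all vanish: ∫_{U(N)} (Λ_X'/Λ_X)(e^{−α}) dX = 0, ∫_{U(N)} (Λ_{X*}'/Λ_{X*})(e^{−α}) dX = 0, and ∫_{U(N)} (Λ_X'/Λ_X)(e^{−α}) · (Λ_X'/Λ_X)(e^{−β}) dX = 0. -/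
open Complex Matrix MeasureTheory

noncomputable section

instance matrixMeasurableSpace (N : ℕ) : MeasurableSpace (Matrix (Fin N) (Fin N) ℂ) :=
  (inferInstance : MeasurableSpace (Fin N → Fin N → ℂ))

/-- The characteristic polynomial `Λ_X(s) = det(I − s X*)` of a unitary matrix `X`. -/
def Lam {N : ℕ} (X : Matrix.unitaryGroup (Fin N) ℂ) (s : ℂ) : ℂ :=
  Matrix.det ((1 : Matrix (Fin N) (Fin N) ℂ) - s • (X : Matrix (Fin N) (Fin N) ℂ)ᴴ)

/-- The characteristic polynomial of `X*`: `Λ_{X*}(s) = det(I − s X)`. -/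
def LamStar {N : ℕ} (X : Matrix.unitaryGroup (Fin N) ℂ) (s : ℂ) : ℂ :=
  Matrix.det ((1 : Matrix (Fin N) (Fin N) ℂ) - s • (X : Matrix (Fin N) (Fin N) ℂ))

/-!
For `z` on the unit circle, replacing `X` by `z • X` turns the logarithmic derivative `L_X(s)` of
`Λ_{X*}` into `z * L_X(z * s)`, and preserves Haar measure. Hence the integral over `X` of
`∏ i, L_X(s i)` equals the integral over `X` of the circle average of
`z ↦ ∏ i, z * L_X(z * s i)`. Since `Λ_{X*}` has no zero in the open unit disc, this last function is
holomorphic on the closed disc, and it vanishes at `0`, so its circle average is zero by the mean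
value property. For `Λ_X` one rotates by `z⁻¹` instead.
-/

open Set Metric

section Rotation

theorem integral_integral_comp_of_measurePreserving {T Ω E : Type*} [MeasurableSpace T]
    [MeasurableSpace Ω] [NormedAddCommGroup E] [NormedSpace ℝ E] (ν : Measure T)
    [IsFiniteMeasure ν] {μ : Measure Ω} [SFinite μ] {ρ : T → Ω → Ω}
    (hρ : Measurable ρ.uncurry) (hinv : ∀ t, MeasurePreserving (ρ t) μ μ) {F : Ω → E}
    (hF : Integrable F μ) :
    ∫ x, ∫ t, F (ρ t x) ∂ν ∂μ = ν.real univ • ∫ x, F x ∂μ := by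
  have hskew : MeasurePreserving (fun p : T × Ω => (p.1, ρ p.1 p.2)) (ν.prod μ) (ν.prod μ) :=
    (MeasurePreserving.id ν).skew_product hρ (.of_forall fun t => (hinv t).map_eq)
  have hint : Integrable (fun p : T × Ω => F (ρ p.1 p.2)) (ν.prod μ) :=
    hskew.integrable_comp_of_integrable (hF.comp_snd ν)
  have hsnd : AEStronglyMeasurable (fun p : T × Ω => F p.2)
      ((ν.prod μ).map fun p => (p.1, ρ p.1 p.2)) :=
    hskew.map_eq.symm ▸ (hF.comp_snd ν).aestronglyMeasurable
  calc ∫ x, ∫ t, F (ρ t x) ∂ν ∂μ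
      = ∫ p, F (ρ p.1 p.2) ∂ν.prod μ := (integral_prod_symm _ hint).symm
    _ = ∫ p, F p.2 ∂(ν.prod μ).map (fun p : T × Ω => (p.1, ρ p.1 p.2)) :=
        (integral_map hskew.aemeasurable hsnd).symm
    _ = ν.real univ • ∫ x, F x ∂μ := by rw [hskew.map_eq, integral_fun_snd]

theorem circleMap_zero_one_mem_unitary (θ : ℝ) : circleMap 0 1 θ ∈ unitary ℂ := by
  simp [Unitary.mem_iff_self_mul_star, mul_conj, normSq_eq_norm_sq]

theorem integral_eq_zero_of_circleAverage_eq_zero {Ω E : Type*} [MeasurableSpace Ω]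
    [NormedAddCommGroup E] [NormedSpace ℝ E] {μ : Measure Ω} [SFinite μ]
    {ρ : unitary ℂ → Ω → Ω} (hρ : Measurable ρ.uncurry)
    (hinv : ∀ z, MeasurePreserving (ρ z) μ μ) {F : Ω → E} (hF : Integrable F μ)
    {g : Ω → ℂ → E} (hg : ∀ z x, F (ρ z x) = g x z)
    (havg : ∀ x, Real.circleAverage (g x) 0 1 = 0) :
    ∫ x, F x ∂μ = 0 := by
  let e (θ : ℝ) : unitary ℂ := ⟨circleMap 0 1 θ, circleMap_zero_one_mem_unitary θ⟩
  have he : Measurable e := (continuous_circleMap 0 1).measurable.subtype_mk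
  have hzero (x : Ω) : ∫ θ in Ioc 0 (2 * Real.pi), F (ρ (e θ) x) = 0 := by
    simpa [Real.circleAverage, intervalIntegral.integral_of_le Real.two_pi_pos.le,
      Real.pi_ne_zero, hg, e] using havg x
  have hmean := integral_integral_comp_of_measurePreserving
    (volume.restrict (Ioc 0 (2 * Real.pi))) (ρ := fun θ => ρ (e θ))
    (hρ.comp (he.prodMap measurable_id)) (fun θ => hinv (e θ)) hF
  simpa [hzero, Real.pi_ne_zero, Real.pi_pos.le] using hmean.symm

end Rotation

section LogDeriv

theorem continuous_deriv_of_continuous_uncurry {Ω E : Type*} [TopologicalSpace Ω]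
    [NormedAddCommGroup E] [NormedSpace ℂ E] [CompleteSpace E] {f : Ω → ℂ → E}
    (hf : Continuous f.uncurry) (hdiff : ∀ x, Differentiable ℂ (f x)) (s : ℂ) :
    Continuous fun x => deriv (f x) s := by
  have hcauchy (x : Ω) : deriv (f x) s =
      (2 * Real.pi * I : ℂ)⁻¹ • ∮ z in C(s, 1), (1 / (z - s) ^ 2) • f x z := by
    rw [(hdiff x).differentiableOn.deriv_eq_smul_circleIntegral one_pos,
      inv_smul_smul₀ two_pi_I_ne_zero]
  simp only [hcauchy, circleIntegral, deriv_circleMap]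
  refine .const_smul ?_ _
  refine intervalIntegral.continuous_parametric_intervalIntegral_of_continuous' ?_ _ _
  fun_prop (disch := simp)

theorem circleAverage_prod_mul_logDeriv_eq_zero {g : ℂ → ℂ} (hg : Differentiable ℂ g)
    (hne : ∀ w, ‖w‖ < 1 → g w ≠ 0) {ι : Type*} [Fintype ι] [Nonempty ι] {s : ι → ℂ}
    (hs : ∀ i, ‖s i‖ < 1) :
    Real.circleAverage (fun z => ∏ i, z * logDeriv g (z * s i)) 0 1 = 0 := by
  have hdiff : DifferentiableOn ℂ (fun z => ∏ i, z * logDeriv g (z * s i)) (closedBall 0 1) := by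
    refine .fun_finsetProd fun i _ => ?_
    have hmul : DifferentiableOn ℂ (fun z => z * s i) (closedBall 0 1) := by fun_prop
    have hquot := (hg.deriv.comp_differentiableOn hmul).div (hg.comp_differentiableOn hmul)
      fun z hz => hne _ ?_
    · exact differentiableOn_id.mul hquot
    · rw [norm_mul]
      exact mul_lt_one_of_nonneg_of_lt_one_right (by simpa using hz) (norm_nonneg _) (hs i)
  rw [DiffContOnCl.circleAverage]
  · simp
  · rw [abs_one]
    exact (hdiff.mono closure_ball_subset_closedBall).diffContOnCl

theorem integral_prod_logDeriv_eq_zero_of_rotate {Ω : Type*} [TopologicalSpace Ω] [CompactSpace Ω]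
    [MeasurableSpace Ω] [BorelSpace Ω] {μ : Measure Ω} [IsFiniteMeasure μ]
    {ρ : unitary ℂ → Ω → Ω} (hρ : Measurable ρ.uncurry)
    (hinv : ∀ z, MeasurePreserving (ρ z) μ μ) {f : Ω → ℂ → ℂ} (hf : Continuous f.uncurry)
    (hdiff : ∀ x, Differentiable ℂ (f x)) (hne : ∀ x w, ‖w‖ < 1 → f x w ≠ 0)
    (hrot : ∀ z x w, f (ρ z x) w = f x (z * w)) {ι : Type*} [Fintype ι] [Nonempty ι]
    {s : ι → ℂ} (hs : ∀ i, ‖s i‖ < 1) :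
    ∫ x, ∏ i, logDeriv (f x) (s i) ∂μ = 0 := by
  have hlog (z x) (w : ℂ) : logDeriv (f (ρ z x)) w = z * logDeriv (f x) (z * w) := by
    rw [funext (hrot z x)]
    simp [logDeriv_apply, deriv_comp_mul_left, mul_div_assoc]
  have hcont : Continuous fun x => ∏ i, logDeriv (f x) (s i) :=
    continuous_finsetProd _ fun i _ =>
      (continuous_deriv_of_continuous_uncurry hf hdiff (s i)).div (by fun_prop)
        fun x => hne x _ (hs i)
  exact integral_eq_zero_of_circleAverage_eq_zero hρ hinv
    (hcont.integrable_of_hasCompactSupport (.of_compactSpace _))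
    (g := fun x z => ∏ i, z * logDeriv (f x) (z * s i)) (fun z x => by simp only [hlog])
    fun x => circleAverage_prod_mul_logDeriv_eq_zero (hdiff x) (hne x) hs

end LogDeriv

section UnitaryMatrix

variable {n : Type*} [Fintype n] [DecidableEq n]

open scoped Matrix.Norms.L2Operator in
theorem det_one_sub_smul_ne_zero_of_mem_unitaryGroup {U : Matrix n n ℂ}
    (hU : U ∈ unitaryGroup n ℂ) {s : ℂ} (hs : ‖s‖ < 1) : det (1 - s • U) ≠ 0 := by
  have hnorm : ‖s • U‖ < 1 := by
    cases subsingleton_or_nontrivial (Matrix n n ℂ)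
    · simp [Subsingleton.elim (s • U) 0]
    · rwa [norm_smul, CStarRing.norm_of_mem_unitary hU, mul_one]
  exact ((isUnit_iff_isUnit_det _).1 (isUnit_one_sub_of_norm_lt_one hnorm)).ne_zero

theorem differentiable_det_one_sub_smul (M : Matrix n n ℂ) :
    Differentiable ℂ fun s : ℂ => det (1 - s • M) := by
  simp only [det_apply']
  refine .fun_sum fun σ _ => .const_mul (.fun_finsetProd fun i _ => ?_) _
  simp only [Matrix.sub_apply, Matrix.smul_apply]
  fun_prop

instance compactSpace_unitaryGroup : CompactSpace (unitaryGroup n ℂ) := by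
  refine isCompact_iff_compactSpace.1 <|
    (isCompact_univ_pi fun _ => isCompact_univ_pi fun _ => isCompact_closedBall (0 : ℂ) 1)
      |>.of_isClosed_subset (isClosed_unitary (R := Matrix n n ℂ)) fun U hU => ?_
  simpa using entry_norm_bound_of_unitary hU

end UnitaryMatrix

section Invariance

variable {R A : Type*} [Monoid R] [StarMul R] [Monoid A] [StarMul A] [MulAction R A]
  [StarModule R A] [SMulCommClass R A A] [IsScalarTower R A A]

instance isScalarTower_unitary : IsScalarTower (unitary R) (unitary A) (unitary A) where
  smul_assoc z U V := Subtype.ext (smul_mul_assoc (z : R) (U : A) (V : A))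

instance continuousSMul_unitary [TopologicalSpace R] [TopologicalSpace A] [ContinuousSMul R A] :
    ContinuousSMul (unitary R) (unitary A) where
  continuous_smul := Continuous.subtype_mk (by fun_prop) _

theorem smulInvariantMeasure_of_measurePreserving_mul_left {M G : Type*} [Monoid G]
    [MeasurableSpace G] [SMul M G] [IsScalarTower M G G] {μ : Measure G}
    (hμ : ∀ g : G, MeasurePreserving (fun x => g * x) μ μ) : SMulInvariantMeasure M G μ where
  measure_preimage_smul c s hs := by
    simpa only [smul_one_mul] using (hμ (c • 1)).measure_preimage hs.nullMeasurableSet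

end Invariance

section CharacteristicPolynomial

instance borelSpace_matrix (N : ℕ) : BorelSpace (Matrix (Fin N) (Fin N) ℂ) :=
  inferInstanceAs (BorelSpace (Fin N → Fin N → ℂ))

variable {N : ℕ}

theorem continuous_uncurry_lamStar : Continuous (LamStar (N := N)).uncurry := by
  unfold LamStar Function.uncurry
  fun_prop

theorem differentiable_lamStar (X : unitaryGroup (Fin N) ℂ) : Differentiable ℂ (LamStar X) :=
  differentiable_det_one_sub_smul (X : Matrix (Fin N) (Fin N) ℂ)

theorem lamStar_ne_zero (X : unitaryGroup (Fin N) ℂ) {s : ℂ} (hs : ‖s‖ < 1) : LamStar X s ≠ 0 :=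
  det_one_sub_smul_ne_zero_of_mem_unitaryGroup X.2 hs

theorem lamStar_smul (z : unitary ℂ) (X : unitaryGroup (Fin N) ℂ) (s : ℂ) :
    LamStar (z • X) s = LamStar X (z * s) := by
  simp [LamStar, Unitary.coe_smul, Submonoid.smul_def, smul_smul, mul_comm]

theorem lam_eq_lamStar_star (X : unitaryGroup (Fin N) ℂ) : Lam X = LamStar (star X) :=
  rfl

theorem continuous_uncurry_lam : Continuous (Lam (N := N)).uncurry := by
  unfold Lam Function.uncurry
  fun_prop

theorem lam_inv_smul (z : unitary ℂ) (X : unitaryGroup (Fin N) ℂ) (s : ℂ) :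
    Lam (z⁻¹ • X) s = Lam X (z * s) := by
  rw [lam_eq_lamStar_star, star_smul, ← Unitary.star_eq_inv, star_star, lamStar_smul,
    lam_eq_lamStar_star]

theorem stmt_15_general (μ : Measure (unitaryGroup (Fin N) ℂ)) [IsFiniteMeasure μ]
    [SMulInvariantMeasure (unitary ℂ) (unitaryGroup (Fin N) ℂ) μ] {ι : Type*} [Fintype ι]
    [Nonempty ι] {s : ι → ℂ} (hs : ∀ i, ‖s i‖ < 1) :
    ∫ X, ∏ i, logDeriv (Lam X) (s i) ∂μ = 0 ∧ ∫ X, ∏ i, logDeriv (LamStar X) (s i) ∂μ = 0 := by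
  have hρ : Continuous fun p : unitary ℂ × unitaryGroup (Fin N) ℂ => p.1⁻¹ • p.2 := by fun_prop
  constructor
  · exact integral_prod_logDeriv_eq_zero_of_rotate (ρ := fun z X => z⁻¹ • X) hρ.measurable
      (fun z => measurePreserving_smul z⁻¹ μ) continuous_uncurry_lam
      (fun X => differentiable_lamStar (star X)) (fun X _ => lamStar_ne_zero (star X))
      lam_inv_smul hs
  · exact integral_prod_logDeriv_eq_zero_of_rotate continuous_smul.measurable
      (fun z => measurePreserving_smul z μ) continuous_uncurry_lamStar differentiable_lamStar
      (fun X _ => lamStar_ne_zero X) lamStar_smul hs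

end CharacteristicPolynomial

theorem norm_exp_neg_lt_one {α : ℂ} (hα : 0 < α.re) : ‖exp (-α)‖ < 1 := by
  simpa [norm_exp] using hα

/-- Averages over `U(N)` of logarithmic derivatives with all `X` (or all `X*`), and of two
logarithmic derivatives both in `X`, vanish. -/
theorem stmt_15 (N : ℕ) (μ : Measure (Matrix.unitaryGroup (Fin N) ℂ))
    [IsProbabilityMeasure μ]
    (hHaar : ∀ A : Matrix.unitaryGroup (Fin N) ℂ,
      MeasurePreserving (fun X => A * X) μ μ)
    (α β : ℂ) (hα : 0 < α.re) (hβ : 0 < β.re) :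
    (∫ X, deriv (Lam X) (Complex.exp (-α)) / Lam X (Complex.exp (-α)) ∂μ) = 0 ∧
    (∫ X, deriv (LamStar X) (Complex.exp (-α)) / LamStar X (Complex.exp (-α)) ∂μ) = 0 ∧
    (∫ X, (deriv (Lam X) (Complex.exp (-α)) / Lam X (Complex.exp (-α))) *
        (deriv (Lam X) (Complex.exp (-β)) / Lam X (Complex.exp (-β))) ∂μ) = 0 := by
  have hs := norm_exp_neg_lt_one hα
  have ht := norm_exp_neg_lt_one hβ
  have := smulInvariantMeasure_of_measurePreserving_mul_left (M := unitary ℂ) hHaar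
  have hsingle := stmt_15_general μ (fun _ : Unit => hs)
  have hpair := stmt_15_general μ (Fin.forall_fin_two.2 ⟨hs, ht⟩ : ∀ i, ‖![_, _] i‖ < 1)
  simp only [Fin.prod_univ_two, Finset.univ_unique, Finset.prod_singleton] at hsingle hpair
  exact ⟨hsingle.1, hsingle.2, hpair.1⟩

end
end
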